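/- Proposition (mini-batch SGD): There exists an absolute constant C > 0 (independent of d, n, b, Q, L, γ, ζ, the functions f_i, and z_0) such that, if 20Lγ ≤ 1, then (1/Q)·∑_{q=0}^{Q−1} E‖∇f(z_q)‖² ≤ C·[ (f(z_0) − f*)/(γQ) + Lγζ²/b ]. -/

import Mathlib

/-! The proof is the classical descent argument. Write `G = ∇F`. The map `G` is the average of the
`∇f i`, hence `L`-Lipschitz, and the mean value theorem gives
`F y ≤ F x + ⟪G x, y - x⟫ + L ‖y - x‖²` (`descent`; the sharp constant `L / 2` is not needed because
only an absolute constant is claimed).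

For a fixed point `x`, average this over all `b`-subsets `S`, with `y` the SGD update of `x` along
`S`. The deviations `v i = ∇f i x - G x` sum to zero and are bounded by `ζ`. The number of
`b`-subsets containing both `i` and `j` depends only on whether `i = j`, so the linear term
averages to zero (`sum_batch_eq_zero`) and the mean of `‖∑ i ∈ S, v i‖²` is at most `b ζ²`
(`sum_batch_norm_sq_le`). With `20 L γ ≤ 1` this shows (`sum_step_le`) that one step decreases the
mean of `F` by at least `(19/20) γ ‖G x‖² - L γ² ζ² / b`.

The iterate `z q` is a function of the batches before time `q`, so it is independent of `B q`, and
it takes finitely many values, so every integral converges. Integrating out `B q`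
(`integral_comp_indep`) turns the pointwise bound into a recursion for the expectations of `F (z q)`
(`recursion`); telescoping and `fstar ≤ F` give the theorem with `C = 2` (`telescope`).
-/

open MeasureTheory ENNReal

/-! ### Sampling without replacement -/

section Combinatorics

variable {ι E : Type*} [Fintype ι] [DecidableEq ι] [NormedAddCommGroup E]

/-- The number of `b`-subsets of an `n`-element type containing a given `k`-element set. -/
def batchCount (n b k : ℕ) : ℕ := if k ≤ b then (n - k).choose (b - k) else 0

lemma card_batch_supset (b : ℕ) (T : Finset ι) :
    ((Finset.univ.powersetCard b).filter (fun S : Finset ι => T ⊆ S)).card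
      = batchCount (Fintype.card ι) b T.card := by
  unfold batchCount
  split_ifs with h
  · simpa using Finset.card_filter_powersetCard_subset T Finset.univ b (Finset.subset_univ _) h
  · rw [Finset.card_eq_zero, Finset.filter_eq_empty_iff]
    intro S hS hTS
    exact h ((Finset.mem_powersetCard.1 hS).2 ▸ Finset.card_le_card hTS)

lemma card_mul_batchCount_one {n b : ℕ} (hb : 1 ≤ b) (hbn : b ≤ n) :
    n * batchCount n b 1 = n.choose b * b := by
  obtain ⟨b, rfl⟩ := Nat.exists_eq_add_of_le' hb
  obtain ⟨n, rfl⟩ := Nat.exists_eq_add_of_le' (hb.trans hbn)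
  simpa [batchCount] using Nat.add_one_mul_choose_eq n b

lemma sum_batch_eq_zero (b : ℕ) (v : ι → E) (hv : ∑ i, v i = 0) :
    ∑ S ∈ (Finset.univ : Finset ι).powersetCard b, ∑ i ∈ S, v i = 0 := by
  have h : ∀ S : Finset ι, ∑ i ∈ S, v i = ∑ i, if i ∈ S then v i else 0 := by
    intro S; simp
  simp_rw [h]
  rw [Finset.sum_comm]
  have h2 : ∀ i : ι, (∑ S ∈ (Finset.univ : Finset ι).powersetCard b, if i ∈ S then v i else 0)
      = batchCount (Fintype.card ι) b 1 • v i := by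
    intro i
    rw [← Finset.sum_filter, Finset.sum_const]
    have := card_batch_supset b ({i} : Finset ι)
    simp only [Finset.singleton_subset_iff, Finset.card_singleton] at this
    rw [this]
  simp_rw [h2]
  rw [← Finset.smul_sum, hv, smul_zero]

/-- Variance of sampling without replacement: the pair counts are constant off the diagonal, so
the cross terms of centred vectors contribute a nonpositive amount. -/
lemma sum_batch_norm_sq_le [InnerProductSpace ℝ E] {b : ℕ} (hb : 1 ≤ b) (hbn : b ≤ Fintype.card ι) (v : ι → E)
    (hv : ∑ i, v i = 0) (ζ : ℝ) (hζ : ∀ i, ‖v i‖ ≤ ζ) :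
    ∑ S ∈ (Finset.univ : Finset ι).powersetCard b, ‖∑ i ∈ S, v i‖ ^ 2
      ≤ (Fintype.card ι).choose b * (b * ζ ^ 2) := by
  set n := Fintype.card ι with hn
  have h : ∀ S : Finset ι, ‖∑ i ∈ S, v i‖ ^ 2
      = ∑ i, ∑ j, if i ∈ S ∧ j ∈ S then inner ℝ (v i) (v j) else 0 := by
    intro S
    rw [← real_inner_self_eq_norm_sq, sum_inner]
    simp_rw [inner_sum]
    simp [ite_and, Finset.sum_ite_mem, Finset.sum_ite_irrel]
  have hpair : ∀ i j : ι, (∑ S ∈ (Finset.univ : Finset ι).powersetCard b,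
      if i ∈ S ∧ j ∈ S then inner ℝ (v i) (v j) else 0)
      = (batchCount n b ({i, j} : Finset ι).card : ℝ) * inner ℝ (v i) (v j) := by
    intro i j
    rw [← Finset.sum_filter, Finset.sum_const, nsmul_eq_mul]
    have := card_batch_supset b ({i, j} : Finset ι)
    simp only [Finset.insert_subset_iff, Finset.singleton_subset_iff] at this
    rw [this]
  have hrow : ∀ i : ι, ∑ j, (batchCount n b ({i, j} : Finset ι).card : ℝ) * inner ℝ (v i) (v j)
      = ((batchCount n b 1 : ℝ) - batchCount n b 2) * ‖v i‖ ^ 2 := by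
    intro i
    have h1 : ∀ j, (batchCount n b ({i, j} : Finset ι).card : ℝ) * inner ℝ (v i) (v j)
        = batchCount n b 2 * inner ℝ (v i) (v j)
          + if j = i then ((batchCount n b 1 : ℝ) - batchCount n b 2) * ‖v i‖ ^ 2 else 0 := by
      intro j
      split_ifs with hij
      · subst hij
        simp only [Finset.pair_eq_singleton, Finset.card_singleton, real_inner_self_eq_norm_sq]
        ring
      · rw [Finset.card_pair (Ne.symm hij)]; ring
    simp_rw [h1]
    rw [Finset.sum_add_distrib, ← Finset.mul_sum, ← inner_sum, hv]
    simp
  simp_rw [h]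
  rw [Finset.sum_comm]
  simp_rw [Finset.sum_comm (s := (Finset.univ : Finset ι).powersetCard b), hpair, hrow]
  calc ∑ i, ((batchCount n b 1 : ℝ) - batchCount n b 2) * ‖v i‖ ^ 2
      ≤ ∑ _i : ι, (batchCount n b 1 : ℝ) * ζ ^ 2 := by
        refine Finset.sum_le_sum fun i _ => ?_
        have h1 : ‖v i‖ ^ 2 ≤ ζ ^ 2 := pow_le_pow_left₀ (norm_nonneg _) (hζ i) 2
        have h2 : (0 : ℝ) ≤ batchCount n b 2 := by positivity
        have h3 : (0 : ℝ) ≤ batchCount n b 1 := by positivity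
        nlinarith [sq_nonneg ‖v i‖]
    _ = ((n * batchCount n b 1 : ℕ) : ℝ) * ζ ^ 2 := by
        rw [Finset.sum_const, Finset.card_univ, nsmul_eq_mul]; push_cast; ring
    _ = _ := by rw [card_mul_batchCount_one hb hbn]; push_cast; ring

end Combinatorics

/-! ### Descent for smooth functions -/

section Descent

variable {E : Type*} [NormedAddCommGroup E] [InnerProductSpace ℝ E] [CompleteSpace E]

/-- Quadratic upper bound from the mean value theorem. The constant is `L`, twice the sharp one. -/
lemma descent {F : E → ℝ} (hF : ∀ x, DifferentiableAt ℝ F x) {L : ℝ} (hL : 0 ≤ L)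
    (hlip : ∀ x y, ‖gradient F x - gradient F y‖ ≤ L * ‖x - y‖) (x y : E) :
    F y ≤ F x + inner ℝ (gradient F x) (y - x) + L * ‖y - x‖ ^ 2 := by
  obtain ⟨w, hw, h⟩ := domain_mvt (f := F) (s := Set.univ) (x := x) (y := y)
    (f' := fun x => fderiv ℝ F x)
    (fun x _ => (hF x).hasFDerivAt.hasFDerivWithinAt) convex_univ trivial trivial
  rw [← inner_gradient_left] at h
  have h1 : inner ℝ (gradient F w) (y - x)
      = inner ℝ (gradient F x) (y - x) + inner ℝ (gradient F w - gradient F x) (y - x) := by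
    rw [inner_sub_left]; ring
  have h2 := real_inner_le_norm (gradient F w - gradient F x) (y - x)
  have h3 : ‖w - x‖ ≤ ‖y - x‖ := by
    rw [segment_eq_image'] at hw
    obtain ⟨t, ⟨ht0, ht1⟩, rfl⟩ := hw
    rw [add_sub_cancel_left, norm_smul, Real.norm_of_nonneg ht0]
    exact mul_le_of_le_one_left (norm_nonneg _) ht1
  have h4 : ‖gradient F w - gradient F x‖ * ‖y - x‖ ≤ L * ‖y - x‖ ^ 2 := by
    have h5 := (hlip w x).trans (mul_le_mul_of_nonneg_left h3 hL)
    nlinarith [mul_le_mul_of_nonneg_right h5 (norm_nonneg (y - x))]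
  linarith

lemma hasGradientAt_average {n : ℕ} {f : Fin n → E → ℝ} (hf : ∀ i x, DifferentiableAt ℝ (f i) x)
    {F : E → ℝ} (hF : ∀ x, F x = (1 / (n : ℝ)) * ∑ i : Fin n, f i x) (x : E) :
    HasGradientAt F ((1 / (n : ℝ)) • ∑ i, gradient (f i) x) x := by
  rw [hasGradientAt_iff_hasFDerivAt]
  have h := (HasFDerivAt.fun_sum (u := Finset.univ)
    (fun i _ => (hf i x).hasGradientAt.hasFDerivAt)).const_mul (1 / (n : ℝ))
  rw [funext hF]
  refine h.congr_fderiv ?_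
  ext y
  simp

/-- Expected descent of one step from a fixed point `x`, written as a sum over all batches. -/
lemma sum_step_le {n b : ℕ} (hb : 1 ≤ b) (hbn : b ≤ n) {L γ ζ : ℝ} (hL : 0 < L) (hγ : 0 < γ)
    {f : Fin n → E → ℝ} (hf : ∀ i x, DifferentiableAt ℝ (f i) x)
    (hlip : ∀ i x y, ‖gradient (f i) x - gradient (f i) y‖ ≤ L * ‖x - y‖)
    {F : E → ℝ} (hF : ∀ x, F x = (1 / (n : ℝ)) * ∑ i : Fin n, f i x)
    (hζ : ∀ i x, ‖gradient (f i) x - gradient F x‖ ≤ ζ) (hstep : 20 * L * γ ≤ 1) (x : E) :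
    ∑ S ∈ (Finset.univ : Finset (Fin n)).powersetCard b,
        F (x - (γ / (b : ℝ)) • ∑ i ∈ S, gradient (f i) x)
      ≤ n.choose b * (F x - 19 / 20 * γ * ‖gradient F x‖ ^ 2 + L * γ ^ 2 * ζ ^ 2 / b) := by
  have hn : (n : ℝ) ≠ 0 := by
    have : 0 < n := by omega
    positivity
  have hb0 : (0 : ℝ) < b := by exact_mod_cast hb
  have hG := hasGradientAt_average hf hF
  have hGlip : ∀ x y, ‖gradient F x - gradient F y‖ ≤ L * ‖x - y‖ := by
    intro x y
    rw [(hG x).gradient, (hG y).gradient, ← smul_sub, ← Finset.sum_sub_distrib, norm_smul]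
    have : ‖∑ i, (gradient (f i) x - gradient (f i) y)‖ ≤ n * (L * ‖x - y‖) := by
      refine (norm_sum_le _ _).trans ((Finset.sum_le_sum fun i _ => hlip i x y).trans ?_)
      simp
    rw [Real.norm_of_nonneg (by positivity)]
    calc 1 / (n : ℝ) * _ ≤ 1 / (n : ℝ) * (n * (L * ‖x - y‖)) := by gcongr
      _ = _ := by field_simp
  set G := gradient F x with hGdef
  set v : Fin n → E := fun i => gradient (f i) x - G with hv
  have hv0 : ∑ i, v i = 0 := by
    simp only [hv, Finset.sum_sub_distrib, Finset.sum_const, Finset.card_univ, Fintype.card_fin]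
    rw [hGdef, (hG x).gradient, ← Nat.cast_smul_eq_nsmul ℝ, smul_smul, mul_one_div_cancel hn,
      one_smul, sub_self]
  have hlin := sum_batch_eq_zero b v hv0
  have hvar := sum_batch_norm_sq_le hb (by simpa using hbn) v hv0 ζ (fun i => hζ i x)
  rw [Fintype.card_fin] at hvar
  have hpt : ∀ S ∈ (Finset.univ : Finset (Fin n)).powersetCard b,
      F (x - (γ / (b : ℝ)) • ∑ i ∈ S, gradient (f i) x)
      ≤ (F x - γ * ‖G‖ ^ 2 + L * γ ^ 2 * ‖G‖ ^ 2)
        + (2 * L * γ ^ 2 / b - γ / b) * inner ℝ G (∑ i ∈ S, v i)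
        + L * γ ^ 2 / b ^ 2 * ‖∑ i ∈ S, v i‖ ^ 2 := by
    intro S hS
    have hSb := (Finset.mem_powersetCard.1 hS).2
    have hsum : (γ / (b : ℝ)) • ∑ i ∈ S, gradient (f i) x
        = γ • G + (γ / (b : ℝ)) • ∑ i ∈ S, v i := by
      simp only [hv, Finset.sum_sub_distrib, Finset.sum_const, hSb]
      rw [← Nat.cast_smul_eq_nsmul ℝ, smul_sub, smul_smul, div_mul_cancel₀ _ hb0.ne']
      abel
    have hd := descent (fun x => (hG x).differentiableAt) hL.le hGlip x
      (x - (γ / (b : ℝ)) • ∑ i ∈ S, gradient (f i) x)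
    rw [sub_sub_cancel_left, norm_neg, inner_neg_right, hsum] at hd
    rw [hsum]
    refine hd.trans (le_of_eq ?_)
    rw [norm_add_sq_real, inner_add_right, real_inner_smul_right, real_inner_smul_right,
      real_inner_smul_left, real_inner_smul_right, norm_smul, norm_smul, mul_pow, mul_pow,
      Real.norm_eq_abs, Real.norm_eq_abs, sq_abs, sq_abs, ← hGdef, real_inner_self_eq_norm_sq]
    field_simp
    ring
  refine (Finset.sum_le_sum hpt).trans ?_
  rw [Finset.sum_add_distrib, Finset.sum_add_distrib, ← Finset.mul_sum, ← Finset.mul_sum,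
    ← inner_sum, hlin, inner_zero_right, Finset.sum_const, Finset.card_powersetCard,
    Finset.card_univ, Fintype.card_fin, nsmul_eq_mul, mul_zero, add_zero]
  have h1 : L * γ ^ 2 / b ^ 2 * ∑ S ∈ (Finset.univ : Finset (Fin n)).powersetCard b,
      ‖∑ i ∈ S, v i‖ ^ 2 ≤ n.choose b * (L * γ ^ 2 * ζ ^ 2 / b) := by
    calc _ ≤ L * γ ^ 2 / b ^ 2 * (n.choose b * (b * ζ ^ 2)) := by gcongr
      _ = _ := by field_simp
  have h2 : L * γ ^ 2 * ‖G‖ ^ 2 ≤ 1 / 20 * γ * ‖G‖ ^ 2 := by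
    have : L * γ ^ 2 ≤ 1 / 20 * γ := by nlinarith
    gcongr
  have h3 : (n.choose b : ℝ) * (F x - γ * ‖G‖ ^ 2 + L * γ ^ 2 * ‖G‖ ^ 2)
      ≤ n.choose b * (F x - 19 / 20 * γ * ‖G‖ ^ 2) := by
    gcongr
    linarith
  linarith

end Descent

/-! ### Independence and the expected recursion -/

section Probability

variable {Ω E : Type*} [MeasurableSpace Ω] {μ : Measure Ω} [IsProbabilityMeasure μ]
  [MeasurableSpace E]

lemma integrable_of_finite_range {Z : Ω → E} (hZ : Measurable Z) (hfin : (Set.range Z).Finite)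
    {φ : E → ℝ} (hφ : Measurable φ) : Integrable (fun ω => φ (Z ω)) μ := by
  obtain ⟨K, hK⟩ := (hfin.image fun e => ‖φ e‖).bddAbove
  exact Integrable.of_bound (hφ.comp hZ).aestronglyMeasurable K
    (Filter.Eventually.of_forall fun ω => hK ⟨Z ω, ⟨ω, rfl⟩, rfl⟩)

/-- Integrating out an independent variable `B` with values in a finite type. -/
lemma integral_comp_indep {β : Type*} [Fintype β] [DecidableEq β] [MeasurableSpace β]
    [MeasurableSingletonClass β] {Z : Ω → E} {B : Ω → β} (hZ : Measurable Z)
    (hfin : (Set.range Z).Finite) (hB : Measurable B) (hind : ProbabilityTheory.IndepFun Z B μ)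
    {h : E → β → ℝ} (hh : ∀ s, Measurable fun e => h e s) :
    ∫ ω, h (Z ω) (B ω) ∂μ = ∑ s, μ.real {ω | B ω = s} * ∫ ω, h (Z ω) s ∂μ := by
  have hms : ∀ s, MeasurableSet {ω | B ω = s} := fun s => hB (measurableSet_singleton s)
  have hsplit : ∀ ω, h (Z ω) (B ω)
      = ∑ s, ({ω | B ω = s}.indicator (1 : Ω → ℝ) ω) * h (Z ω) s := by
    intro ω
    simp [Set.indicator_apply]
  simp_rw [hsplit]
  rw [integral_finsetSum]
  · refine Finset.sum_congr rfl fun s _ => ?_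
    have hi : ProbabilityTheory.IndepFun ({ω | B ω = s}.indicator (1 : Ω → ℝ))
        (fun ω => h (Z ω) s) μ := by
      have := hind.symm.comp (φ := ({s} : Set β).indicator (1 : β → ℝ))
        (measurable_one.indicator (measurableSet_singleton s)) (hh s)
      exact this
    rw [hi.integral_fun_mul_eq_mul_integral
      (measurable_one.indicator (hms s)).aestronglyMeasurable
      ((hh s).comp hZ).aestronglyMeasurable, integral_indicator_one (hms s)]
  · intro s _
    have := (integrable_of_finite_range (μ := μ) hZ hfin (hh s)).indicator (hms s)
    refine this.congr (Filter.Eventually.of_forall fun ω => ?_)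
    simp [Set.indicator_apply]

end Probability

/-- The iterate `z q` depends only on the batches drawn before time `q` and takes finitely many
values. -/
lemma iterate_measurable {n Q : ℕ} {E Ω : Type*} [MeasurableSpace E]
    {B : Fin Q → Ω → Finset (Fin n)} {z0 : E} {z : ℕ → Ω → E} (hz0 : z 0 = fun _ => z0)
    {T : E → Finset (Fin n) → E} (hT : ∀ S, Measurable fun x => T x S)
    (hz : ∀ q : Fin Q, z ((q : ℕ) + 1) = fun ω => T (z q ω) (B q ω)) (q : ℕ) (hq : q ≤ Q) :
    (Set.range (z q)).Finite ∧
      Measurable[⨆ i ∈ {i : Fin Q | (i : ℕ) < q}, MeasurableSpace.comap (B i) ⊤] (z q) := by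
  induction q with
  | zero =>
    rw [hz0]
    exact ⟨Set.finite_range_const, @measurable_const _ _ _ _ _⟩
  | succ q ih =>
    obtain ⟨h1, h2⟩ := ih (by omega)
    have hstep := hz ⟨q, hq⟩
    simp only at hstep
    rw [hstep]
    refine ⟨(Set.Finite.image2 T h1 (Set.toFinite (Set.univ : Set (Finset (Fin n))))).subset ?_, ?_⟩
    · rintro _ ⟨ω, rfl⟩
      exact ⟨z q ω, ⟨ω, rfl⟩, _, trivial, rfl⟩
    · let _ : MeasurableSpace (Finset (Fin n)) := ⊤
      have hTm : Measurable fun p : E × Finset (Fin n) => T p.1 p.2 :=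
        measurable_from_prod_countable_left hT
      refine hTm.comp (Measurable.prodMk ?_ ?_)
      · refine h2.mono ?_ le_rfl
        exact biSup_mono fun i hi => Nat.lt_succ_of_lt hi
      · refine Measurable.mono (comap_measurable (B ⟨q, hq⟩)) ?_ le_rfl
        exact le_iSup₂_of_le (f := fun (i : Fin Q) (_ : i ∈ {i : Fin Q | (i : ℕ) < q + 1}) =>
          MeasurableSpace.comap (B i) ⊤) ⟨q, hq⟩ (Nat.lt_succ_self q) le_rfl

lemma integrable_iterate {n Q : ℕ} {E Ω : Type*} [MeasurableSpace E] {mΩ : MeasurableSpace Ω}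
    {μ : Measure Ω} [IsProbabilityMeasure μ] {B : Fin Q → Ω → Finset (Fin n)}
    (hBm : ∀ (q : Fin Q) (S : Finset (Fin n)), MeasurableSet {ω | B q ω = S})
    {z0 : E} {z : ℕ → Ω → E} (hz0 : z 0 = fun _ => z0)
    {T : E → Finset (Fin n) → E} (hT : ∀ S, Measurable fun x => T x S)
    (hz : ∀ q : Fin Q, z ((q : ℕ) + 1) = fun ω => T (z q ω) (B q ω)) {q : ℕ} (hq : q ≤ Q)
    {φ : E → ℝ} (hφ : Measurable φ) : Integrable (fun ω => φ (z q ω)) μ := by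
  let _ : MeasurableSpace (Finset (Fin n)) := ⊤
  have hBq : ∀ q, Measurable (B q) := fun q => measurable_to_countable' fun S => hBm q S
  obtain ⟨hfin, hm⟩ := iterate_measurable hz0 hT hz q hq
  exact integrable_of_finite_range
    (hm.mono (iSup₂_le fun i _ => (hBq i).comap_le) le_rfl) hfin hφ

/-- One step of SGD in expectation. The pointwise bound on the sum over all batches passes to
the integral because `z q` is independent of the uniformly distributed `B q`. -/
lemma recursion {n Q b : ℕ} (hbn : b ≤ n) {E Ω : Type*} [MeasurableSpace E] {mΩ : MeasurableSpace Ω}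
    {μ : Measure Ω} [IsProbabilityMeasure μ] {B : Fin Q → Ω → Finset (Fin n)}
    (hBm : ∀ (q : Fin Q) (S : Finset (Fin n)), MeasurableSet {ω | B q ω = S})
    (hBc : ∀ (q : Fin Q) (ω : Ω), (B q ω).card = b)
    (hBu : ∀ (q : Fin Q) (S : Finset (Fin n)), S.card = b →
      μ {ω | B q ω = S} = ((n.choose b : ℝ≥0∞))⁻¹)
    (hind : ProbabilityTheory.iIndep (fun q : Fin Q => MeasurableSpace.comap (B q) ⊤) μ)
    {z0 : E} {z : ℕ → Ω → E} (hz0 : z 0 = fun _ => z0)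
    {T : E → Finset (Fin n) → E} (hT : ∀ S, Measurable fun x => T x S)
    (hz : ∀ q : Fin Q, z ((q : ℕ) + 1) = fun ω => T (z q ω) (B q ω))
    {F ψ : E → ℝ} (hF : Measurable F) (hψ : Measurable ψ)
    (hstep : ∀ x, ∑ S ∈ (Finset.univ : Finset (Fin n)).powersetCard b, F (T x S)
      ≤ n.choose b * ψ x) (q : Fin Q) :
    ∫ ω, F (z (q + 1) ω) ∂μ ≤ ∫ ω, ψ (z q ω) ∂μ := by
  let _ : MeasurableSpace (Finset (Fin n)) := ⊤
  have hBq : ∀ q, Measurable (B q) := fun q => measurable_to_countable' fun S => hBm q S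
  obtain ⟨hfin, hm⟩ := iterate_measurable hz0 hT hz q q.2.le
  have hle : ∀ i, MeasurableSpace.comap (B i) ⊤ ≤ mΩ := fun i => (hBq i).comap_le
  have hZ : Measurable (z q) := hm.mono (iSup₂_le fun i _ => hle i) le_rfl
  have hint : ∀ φ : E → ℝ, Measurable φ → Integrable (fun ω => φ (z q ω)) μ :=
    fun φ hφ => integrable_of_finite_range hZ hfin hφ
  have hindep : ProbabilityTheory.IndepFun (z q) (B q) μ := by
    rw [ProbabilityTheory.IndepFun_iff_Indep]
    have h := ProbabilityTheory.indep_iSup_of_disjoint hle hind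
      (S := {i : Fin Q | (i : ℕ) < q}) (T := {q}) (by simp)
    refine ProbabilityTheory.indep_of_indep_of_le_left
      (ProbabilityTheory.indep_of_indep_of_le_right h ?_) hm.comap_le
    simp
    rfl
  have hFT : ∀ S, Measurable fun x => F (T x S) := fun S => hF.comp (hT S)
  have hC : (0 : ℝ) < n.choose b := by exact_mod_cast Nat.choose_pos hbn
  rw [hz q, integral_comp_indep (h := fun x S => F (T x S)) hZ hfin (hBq q) hindep hFT]
  have hw : ∀ S, μ.real {ω | B q ω = S} * ∫ ω, F (T (z q ω) S) ∂μ
      = if S ∈ (Finset.univ : Finset (Fin n)).powersetCard b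
        then (n.choose b : ℝ)⁻¹ * ∫ ω, F (T (z q ω) S) ∂μ else 0 := by
    intro S
    simp only [Finset.mem_powersetCard, Finset.subset_univ, true_and]
    split_ifs with hS
    · rw [Measure.real, hBu q S hS]; simp
    · have : {ω | B q ω = S} = ∅ := by
        ext ω
        simp only [Set.mem_ofPred_eq, Set.mem_empty_iff_false, iff_false]
        rintro rfl
        exact hS (hBc q ω)
      simp [this]
  rw [Finset.sum_congr rfl fun S _ => hw S, ← Finset.sum_filter, Finset.filter_mem_eq_inter,
    Finset.univ_inter, ← Finset.mul_sum, ← integral_finsetSum _ fun S _ => hint _ (hFT S)]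
  rw [inv_mul_le_iff₀ hC, ← integral_const_mul]
  exact integral_mono (integrable_finsetSum _ fun S _ => hint _ (hFT S))
    ((hint ψ hψ).const_mul _) fun ω => hstep (z q ω)

/-- Here `a q` and `g q` play the roles of the expectations of `F (z q)` and `‖∇F (z q)‖ ^ 2`. -/
lemma telescope {Q : ℕ} (hQ : 1 ≤ Q) {γ e A : ℝ} (hγ : 0 < γ) {a g : ℕ → ℝ}
    (hg : ∀ q, 0 ≤ g q) (hA : A ≤ a Q)
    (hstep : ∀ q < Q, a (q + 1) ≤ a q - 19 / 20 * γ * g q + e) :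
    1 / (Q : ℝ) * ∑ q ∈ Finset.range Q, g q ≤ 2 * ((a 0 - A) / (γ * Q) + e / γ) := by
  have htel : ∀ m ≤ Q, a m + 19 / 20 * γ * ∑ q ∈ Finset.range m, g q ≤ a 0 + m * e := by
    intro m
    induction m with
    | zero => intro _; simp
    | succ m ih =>
      intro hm
      have h1 := ih (by omega)
      have h2 := hstep m hm
      rw [Finset.sum_range_succ]
      push_cast
      linarith
  have hQ0 : (0 : ℝ) < Q := by exact_mod_cast hQ
  have hfin := htel Q le_rfl
  have hS0 : 0 ≤ ∑ q ∈ Finset.range Q, g q := Finset.sum_nonneg fun q _ => hg q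
  generalize ∑ q ∈ Finset.range Q, g q = s at *
  have hkey : γ * s ≤ 2 * (a 0 - A + Q * e) := by
    linarith [mul_nonneg hγ.le hS0]
  calc 1 / (Q : ℝ) * s = γ * s / (γ * Q) := by field_simp
    _ ≤ 2 * (a 0 - A + Q * e) / (γ * Q) := by gcongr
    _ = _ := by field_simp

/-- **Proposition (mini-batch SGD).**  There is an absolute constant `C > 0`
such that for mini-batch SGD with uniformly random, mutually independent
batches of size `b`, if `20Lγ ≤ 1`, then
`(1/Q)∑_{q<Q} E‖∇f(z_q)‖² ≤ C[(f(z_0)−f*)/(γQ) + Lγζ²/b]`. -/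
theorem minibatch_sgd_rate :
    ∃ C : ℝ, 0 < C ∧
      ∀ (d n Q b : ℕ), 1 ≤ d → 1 ≤ n → 1 ≤ Q → 1 ≤ b → b ≤ n →
      ∀ (L γ ζ : ℝ), 0 < L → 0 < γ → 0 ≤ ζ →
      ∀ (f : Fin n → EuclideanSpace ℝ (Fin d) → ℝ),
      (∀ i x, DifferentiableAt ℝ (f i) x) →
      (∀ (i : Fin n) (x y : EuclideanSpace ℝ (Fin d)),
        ‖gradient (f i) x - gradient (f i) y‖ ≤ L * ‖x - y‖) →
      ∀ (F : EuclideanSpace ℝ (Fin d) → ℝ),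
      (∀ x, F x = (1 / (n : ℝ)) * ∑ i : Fin n, f i x) →
      ∀ (fstar : ℝ), IsGLB (Set.range F) fstar →
      (∀ (i : Fin n) (x : EuclideanSpace ℝ (Fin d)),
        ‖gradient (f i) x - gradient F x‖ ≤ ζ) →
      ∀ (Ω : Type) (_ : MeasurableSpace Ω) (μ : Measure Ω),
        IsProbabilityMeasure μ →
      ∀ (B : Fin Q → Ω → Finset (Fin n)),
      (∀ (q : Fin Q) (S : Finset (Fin n)), MeasurableSet {ω | B q ω = S}) →
      (∀ (q : Fin Q) (ω : Ω), (B q ω).card = b) →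
      (∀ (q : Fin Q) (S : Finset (Fin n)), S.card = b →
        μ {ω | B q ω = S} = ((n.choose b : ℝ≥0∞))⁻¹) →
      ProbabilityTheory.iIndep
        (fun q : Fin Q => MeasurableSpace.comap (B q) ⊤) μ →
      ∀ (z0 : EuclideanSpace ℝ (Fin d)) (z : ℕ → Ω → EuclideanSpace ℝ (Fin d)),
      z 0 = (fun _ => z0) →
      (∀ q : Fin Q, z ((q : ℕ) + 1) = fun ω =>
        z (q : ℕ) ω - (γ / (b : ℝ)) • ∑ i ∈ B q ω, gradient (f i) (z (q : ℕ) ω)) →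
      20 * L * γ ≤ 1 →
      (1 / (Q : ℝ)) * ∑ q ∈ Finset.range Q, (∫ ω, ‖gradient F (z q ω)‖ ^ 2 ∂μ)
        ≤ C * ((F z0 - fstar) / (γ * Q) + L * γ * ζ ^ 2 / b) := by
  -- Telescoping yields `20 / 19`, rounded up.
  refine ⟨2, by norm_num, ?_⟩
  intro d n Q b _ _ hQ hb hbn L γ ζ hL hγ _ f hf hlip F hF fstar hfs hζ Ω _ μ _ B hBm hBc hBu
    hind z0 z hz0 hz hstep
  have hgc : ∀ i, Continuous (gradient (f i)) := fun i =>
    (LipschitzWith.of_dist_le_mul (K := L.toNNReal) fun x y => by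
      rw [dist_eq_norm, dist_eq_norm, Real.coe_toNNReal L hL.le]
      exact hlip i x y).continuous
  have hG := hasGradientAt_average hf hF
  have hFm : Measurable F :=
    (continuous_iff_continuousAt.2 fun x => (hG x).continuousAt).measurable
  have hGm : Measurable (gradient F) := by
    rw [gradient_eq hG]
    exact ((continuous_finsetSum _ fun i _ => hgc i).const_smul (1 / (n : ℝ))).measurable
  have hT : ∀ S : Finset (Fin n), Measurable fun x : EuclideanSpace ℝ (Fin d) =>
      x - (γ / (b : ℝ)) • ∑ i ∈ S, gradient (f i) x :=
    fun S => Continuous.measurable (by fun_prop)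
  have hint : ∀ q ≤ Q, ∀ φ : EuclideanSpace ℝ (Fin d) → ℝ, Measurable φ →
      Integrable (fun ω => φ (z q ω)) μ := fun q hq φ hφ =>
    integrable_iterate hBm hz0
      (T := fun x S => x - (γ / (b : ℝ)) • ∑ i ∈ S, gradient (f i) x) hT hz hq hφ
  have hrec := recursion (μ := μ) hbn hBm hBc hBu hind hz0
    (T := fun x S => x - (γ / (b : ℝ)) • ∑ i ∈ S, gradient (f i) x) hT hz hFm
    (ψ := fun x => F x - 19 / 20 * γ * ‖gradient F x‖ ^ 2 + L * γ ^ 2 * ζ ^ 2 / b) (by fun_prop)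
    (fun x => sum_step_le hb hbn hL hγ hf hlip hF hζ hstep x)
  have hone : ∀ q : Fin Q, ∫ ω, F (z (q + 1) ω) ∂μ
      ≤ ∫ ω, F (z q ω) ∂μ - 19 / 20 * γ * ∫ ω, ‖gradient F (z q ω)‖ ^ 2 ∂μ
        + L * γ ^ 2 * ζ ^ 2 / b := by
    intro q
    have hle := hrec q
    have i1 := hint q q.2.le F hFm
    have i2 := (hint q q.2.le (fun x => ‖gradient F x‖ ^ 2) (by fun_prop)).const_mul (19 / 20 * γ)
    refine hle.trans (le_of_eq ?_)
    rw [integral_add (by exact i1.sub i2) (integrable_const _), integral_sub i1 i2,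
      integral_const_mul, integral_const]
    simp
  have hlow : fstar ≤ ∫ ω, F (z Q ω) ∂μ := by
    have h := integral_mono (integrable_const fstar) (hint Q le_rfl F hFm)
      fun ω => hfs.1 ⟨z Q ω, rfl⟩
    simpa using h
  have h0 : ∫ ω, F (z 0 ω) ∂μ = F z0 := by simp [hz0]
  have h := telescope hQ hγ (a := fun q => ∫ ω, F (z q ω) ∂μ)
    (g := fun q => ∫ ω, ‖gradient F (z q ω)‖ ^ 2 ∂μ)
    (fun q => integral_nonneg fun ω => by positivity) hlow (fun q hq => hone ⟨q, hq⟩)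
  rw [h0] at h
  refine h.trans (le_of_eq ?_)
  have hb0 : (0 : ℝ) < b := by exact_mod_cast hb
  field_simp
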